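/- Let H = H_1 ⊗ ... ⊗ H_m be a multipartite complex Hilbert space with dim H_j = d_j, and let n > 1 + ∑_j (d_j - 1). Then for almost every n-tuple (ψ_1, ..., ψ_n) of unit vectors of H (with respect to the n-fold product of the uniform rotation-invariant probability measure on the unit sphere of H), there do NOT exist product vectors φ_1, ..., φ_n of H such that for all j, k: ⟨φ_j, ψ_k⟩ = 0 if and only if j ≠ k. (By Chefles' criterion, the n states are not unambiguously locally distinguishable.) -/

import Mathlib

/-!
An `n`-tuple that is locally distinguishable provides, already from `φ_1` alone, a product vector
orthogonal to the `n - 1` states `ψ_2, ..., ψ_n`. Up to scalars, product vectors form a variety of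
dimension `S = ∑ j, (d j - 1)`, and each generic state cuts that dimension down by one, so
`n - 1 > S` generic states have no common orthogonal product vector.

Two facts make this precise.

* *Hyperplanes are null* (`measure_submodule_eq_zero`). All unit vectors have orthogonal hyperplanes
  of the same measure `c`, by unitary invariance. The hyperplanes orthogonal to the points
  `(1, t, t², ...)`, `t ∈ ℕ`, of the moment curve are in general position, so a unit vector lies in
  at most `dim H` of them. Hence `N * c ≤ dim H` for every `N`, that is `c = 0`.

* *Dimension count* (`measure_exists_common_zero`). The product vectors whose `i₀`-th coordinate
  does not vanish are parametrized by an affine space of dimension `S`, on which `⟨φ, ψ⟩` is a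
  polynomial depending linearly on `ψ` and equal to `1` for a suitable `ψ`. Given an ideal `I`, each
  of its finitely many minimal primes contains this polynomial only for `ψ` in a proper subspace, so
  for almost every `ψ` adding the polynomial to `I` raises the least height of a prime above `I` by at
  least one. Heights are bounded by `S`, so after more than `S` steps no prime is left and there is
  no common zero. Fubini's theorem applies to this induction because the exceptional sets are
  projections of closed sets in σ-compact spaces, hence measurable.
-/

open MeasureTheory
open scoped ComplexInnerProductSpace

/-- The multipartite Hilbert space `H = H_1 ⊗ ... ⊗ H_m` with `dim H_j = d j`,
realized concretely as the complex Euclidean space indexed by the product of the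
local (basis) index sets. -/
abbrev MultiSpace {m : ℕ} (d : Fin m → ℕ) : Type :=
  EuclideanSpace ℂ ((j : Fin m) → Fin (d j))

/-- `φ` is a (nonzero) product vector `v_1 ⊗ ... ⊗ v_m`. -/
def IsProdVec {m : ℕ} (d : Fin m → ℕ) (φ : MultiSpace d) : Prop :=
  φ ≠ 0 ∧ ∃ v : (j : Fin m) → EuclideanSpace ℂ (Fin (d j)),
    ∀ k : (j : Fin m) → Fin (d j), φ k = ∏ j, v j (k j)

/-- The map induced on the unit sphere by a unitary (linear isometric) operator. -/
noncomputable def sphereMap {E : Type*} [NormedAddCommGroup E] [InnerProductSpace ℂ E]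
    (U : E ≃ₗᵢ[ℂ] E) (x : Metric.sphere (0 : E) 1) : Metric.sphere (0 : E) 1 :=
  ⟨U x, by
    have hx : ‖(x : E)‖ = 1 := mem_sphere_zero_iff_norm.mp x.2
    simp [mem_sphere_zero_iff_norm, hx]⟩

/-! ### Hyperplanes are null -/

section Hyperplanes

variable {ι : Type*} [Fintype ι]

/-- The unitary group acts transitively on unit vectors. -/
theorem exists_unitary_apply_eq {u w : EuclideanSpace ℂ ι} (hu : ‖u‖ = 1) (hw : ‖w‖ = 1) :
    ∃ U : EuclideanSpace ℂ ι ≃ₗᵢ[ℂ] EuclideanSpace ℂ ι, U u = w := by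
  classical
  obtain ⟨i⟩ : Nonempty ι := by
    by_contra h
    rw [not_nonempty_iff] at h
    have : u = 0 := Subsingleton.elim _ _
    simp [this] at hu
  have key : ∀ v : EuclideanSpace ℂ ι, ‖v‖ = 1 →
      ∃ b : OrthonormalBasis ι ℂ (EuclideanSpace ℂ ι), b i = v := by
    intro v hv
    have ho : Orthonormal ℂ (({i} : Set ι).domRestrict (fun _ : ι => v)) := by
      refine ⟨fun _ => hv, fun a b hab => (hab (Subsingleton.elim _ _)).elim⟩
    obtain ⟨b, hb⟩ := ho.exists_orthonormalBasis_extension_of_card_eq (by simp)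
    exact ⟨b, hb i rfl⟩
  obtain ⟨b, hb⟩ := key u hu
  obtain ⟨c, hc⟩ := key w hw
  refine ⟨b.equiv c (Equiv.refl ι), ?_⟩
  rw [← hb, ← hc]
  simp

/-- A hyperplane contains at most `dim` points of the moment curve `t ↦ (t ^ e i)_i`, since they are
roots of a nonzero polynomial of degree less than `dim`. -/
theorem card_filter_moment_le (e : ι ≃ Fin (Fintype.card ι)) {x : EuclideanSpace ℂ ι}
    (hx : x ≠ 0) (N : ℕ) :
    ((Finset.range N).filter fun t : ℕ =>
      ∑ i, x i * (t : ℂ) ^ (e i : ℕ) = 0).card ≤ Fintype.card ι := by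
  classical
  set p : Polynomial ℂ := ∑ i, Polynomial.C (x i) * Polynomial.X ^ (e i : ℕ) with hp
  have hdeg : p.natDegree ≤ Fintype.card ι := by
    refine Polynomial.natDegree_sum_le_of_forall_le _ _ fun i _ => ?_
    exact (Polynomial.natDegree_C_mul_X_pow_le _ _).trans (e i).2.le
  have hp0 : p ≠ 0 := by
    intro h
    apply hx
    ext i
    have := congrArg (fun q => Polynomial.coeff q (e i : ℕ)) h
    simpa [hp, Polynomial.finsetSum_coeff, Polynomial.coeff_X_pow, Fin.val_inj] using this
  have hsub : (((Finset.range N).filter fun t : ℕ =>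
      ∑ i, x i * (t : ℂ) ^ (e i : ℕ) = 0).image (fun t : ℕ => (t : ℂ))) ⊆ p.roots.toFinset := by
    intro z hz
    simp only [Finset.mem_image, Finset.mem_filter] at hz
    obtain ⟨t, ⟨-, ht⟩, rfl⟩ := hz
    simp only [Multiset.mem_toFinset, Polynomial.mem_roots hp0, Polynomial.IsRoot.def]
    simpa [hp, Polynomial.eval_finsetSum] using ht
  calc _ = _ := (Finset.card_image_of_injective _ Nat.cast_injective).symm
    _ ≤ p.roots.toFinset.card := Finset.card_le_card hsub
    _ ≤ p.roots.card := Multiset.toFinset_card_le _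
    _ ≤ p.natDegree := Polynomial.card_roots' p
    _ ≤ _ := hdeg

variable [MeasurableSpace (EuclideanSpace ℂ ι)] [BorelSpace (EuclideanSpace ℂ ι)]

theorem measurableSet_orthogonal (w : EuclideanSpace ℂ ι) :
    MeasurableSet {x : Metric.sphere (0 : EuclideanSpace ℂ ι) 1 |
      ⟪w, (x : EuclideanSpace ℂ ι)⟫ = 0} :=
  (isClosed_eq (by fun_prop) continuous_const).measurableSet

/-- Hyperplanes are null: the hyperplanes orthogonal to the points of the moment curve all have the
same measure, and a unit vector lies in a bounded number of them. -/
theorem measure_orthogonal_eq_zero (μ : Measure (Metric.sphere (0 : EuclideanSpace ℂ ι) 1))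
    [IsProbabilityMeasure μ]
    (hinv : ∀ U : EuclideanSpace ℂ ι ≃ₗᵢ[ℂ] EuclideanSpace ℂ ι, μ.map (sphereMap U) = μ)
    {w : EuclideanSpace ℂ ι} (hw : ‖w‖ = 1) :
    μ {x | ⟪w, (x : EuclideanSpace ℂ ι)⟫ = 0} = 0 := by
  classical
  set e := Fintype.equivFin ι
  set A : EuclideanSpace ℂ ι → Set (Metric.sphere (0 : EuclideanSpace ℂ ι) 1) :=
    fun u => {x | ⟪u, (x : EuclideanSpace ℂ ι)⟫ = 0} with hA
  have hunit : ∀ u, ‖u‖ = 1 → μ (A u) = μ (A w) := by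
    intro u hu
    obtain ⟨U, hU⟩ := exists_unitary_apply_eq hu hw
    have hm : Measurable (sphereMap U) := by
      refine Continuous.measurable ?_
      unfold sphereMap
      fun_prop
    have h1 : sphereMap U ⁻¹' A w = A u := by
      ext x
      simp only [hA, Set.mem_preimage, Set.mem_ofPred_eq, sphereMap, ← hU,
        LinearIsometryEquiv.inner_map_map]
    rw [← h1, ← Measure.map_apply hm (measurableSet_orthogonal w), hinv U]
  -- the moment curve, in the coordinates numbered by `e`
  set v : ℕ → EuclideanSpace ℂ ι := fun t => WithLp.toLp 2 fun i => (t : ℂ) ^ (e i : ℕ) with hv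
  have hvA : ∀ t x, x ∈ A (v t) ↔
      ∑ i, (x : EuclideanSpace ℂ ι) i * (t : ℂ) ^ (e i : ℕ) = 0 := by
    intro t x
    change ⟪v t, (x : EuclideanSpace ℂ ι)⟫ = 0 ↔ _
    simp [hv, PiLp.inner_apply]
  have hvne : ∀ t, v t ≠ 0 := by
    intro t h
    have hw0 : w ≠ 0 := by
      rintro rfl
      simp at hw
    have hpos : 0 < Fintype.card ι := by
      rw [Fintype.card_pos_iff]
      by_contra hne
      rw [not_nonempty_iff] at hne
      exact hw0 (Subsingleton.elim _ _)
    have := congrArg (fun y : EuclideanSpace ℂ ι => y (e.symm ⟨0, hpos⟩)) h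
    simp [hv] at this
  have hmeas : ∀ t, μ (A (v t)) = μ (A w) := by
    intro t
    have hn : ‖v t‖ ≠ 0 := norm_ne_zero_iff.2 (hvne t)
    rw [← hunit (((‖v t‖⁻¹ : ℝ) : ℂ) • v t) (by simp [norm_smul, hn])]
    congr 1
    ext x
    simp [hA, hvne t]
  have hbound : ∀ N : ℕ, (N : ENNReal) * μ (A w) ≤ Fintype.card ι := by
    intro N
    calc (N : ENNReal) * μ (A w) = ∑ t ∈ Finset.range N, μ (A (v t)) := by
          simp [hmeas]
      _ = ∑ t ∈ Finset.range N, ∫⁻ x, (A (v t)).indicator 1 x ∂μ := by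
          refine Finset.sum_congr rfl fun t _ => ?_
          rw [lintegral_indicator_one (measurableSet_orthogonal _)]
      _ = ∫⁻ x, ∑ t ∈ Finset.range N, (A (v t)).indicator 1 x ∂μ := by
          rw [lintegral_finsetSum]
          exact fun t _ => measurable_one.indicator (measurableSet_orthogonal _)
      _ ≤ ∫⁻ x, (Fintype.card ι : ENNReal) ∂μ := by
          refine lintegral_mono fun x => ?_
          have hx : (x : EuclideanSpace ℂ ι) ≠ 0 := by
            intro h
            have := x.2
            simp [h] at this
          have := card_filter_moment_le e hx N
          simp only [Set.indicator_apply, Pi.one_apply, hvA, Finset.sum_boole]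
          exact_mod_cast this
      _ = Fintype.card ι := by simp
  by_contra h0
  obtain ⟨N, hN⟩ := ENNReal.exists_nat_mul_gt h0 (ENNReal.natCast_ne_top (Fintype.card ι))
  exact absurd (hbound N) (not_le.2 hN)

theorem measure_submodule_eq_zero (μ : Measure (Metric.sphere (0 : EuclideanSpace ℂ ι) 1))
    [IsProbabilityMeasure μ]
    (hinv : ∀ U : EuclideanSpace ℂ ι ≃ₗᵢ[ℂ] EuclideanSpace ℂ ι, μ.map (sphereMap U) = μ)
    {W : Submodule ℂ (EuclideanSpace ℂ ι)} (hW : W ≠ ⊤) :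
    μ {x | (x : EuclideanSpace ℂ ι) ∈ W} = 0 := by
  have hb : Wᗮ ≠ ⊥ := fun h => hW ((Submodule.orthogonal_eq_bot_iff).1 h)
  obtain ⟨w, hw, hw0⟩ := Submodule.exists_mem_ne_zero_of_ne_bot hb
  have hn : ‖w‖ ≠ 0 := norm_ne_zero_iff.2 hw0
  refine measure_mono_null ?_ (measure_orthogonal_eq_zero μ hinv
    (w := ((‖w‖⁻¹ : ℝ) : ℂ) • w) (by simp [norm_smul, hn]))
  intro x hx
  have := (Submodule.mem_orthogonal' W w).1 hw _ hx
  simp [this]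

end Hyperplanes

/-! ### Generic members of a linear system -/

section Intersection

open MvPolynomial

/-- The projection of a closed set along a σ-compact factor is σ-compact, hence measurable. -/
theorem measurableSet_exists {Z Y : Type*} [TopologicalSpace Z] [SigmaCompactSpace Z]
    [TopologicalSpace Y] [SigmaCompactSpace Y] [T2Space Y] [MeasurableSpace Y] [BorelSpace Y]
    {K : Set (Z × Y)} (hK : IsClosed K) : MeasurableSet {y | ∃ z, (z, y) ∈ K} := by
  have h : IsSigmaCompact (Prod.snd '' K) :=
    (isSigmaCompact_univ.of_isClosed_subset hK (Set.subset_univ K)).image continuous_snd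
  obtain ⟨C, hC, hCK⟩ := h
  have : {y | ∃ z, (z, y) ∈ K} = ⋃ n, C n := by
    rw [hCK]
    ext y
    simp
  rw [this]
  exact MeasurableSet.iUnion fun n => (hC n).measurableSet

variable {ι σ : Type*} [Fintype ι]

/-- The linear system spanned by `M`: the polynomial `∑ i, x i * M i` attached to the coefficient
vector `x`. -/
noncomputable def linForm (M : ι → MvPolynomial σ ℂ) :
    EuclideanSpace ℂ ι →ₗ[ℂ] MvPolynomial σ ℂ where
  toFun x := ∑ i, x i • M i
  map_add' x y := by simp [add_smul, Finset.sum_add_distrib]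
  map_smul' c x := by simp [Finset.smul_sum, smul_smul]

theorem eval_linForm (M : ι → MvPolynomial σ ℂ) (z : σ → ℂ) (x : EuclideanSpace ℂ ι) :
    eval z (linForm M x) = ∑ i, x i * eval z (M i) := by
  simp [linForm, smul_eval]

/-- Adding to `I` an element outside all its minimal primes raises the least height of a prime above
`I` by at least one. -/
theorem exists_isPrime_height_add_one_le {R : Type*} [CommRing R] {I P : Ideal R} {f : R}
    (hf : ∀ Q ∈ I.minimalPrimes, f ∉ Q) [P.IsPrime] (hIP : I ⊔ Ideal.span {f} ≤ P) :
    ∃ Q : Ideal R, Q.IsPrime ∧ I ≤ Q ∧ Q.height + 1 ≤ P.height := by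
  obtain ⟨Q, hQ, hQP⟩ := Ideal.exists_minimalPrimes_le (le_sup_left.trans hIP)
  have := hQ.1.1
  refine ⟨Q, hQ.1.1, hQ.1.2, Ideal.height_add_one_le_of_lt_of_isPrime (lt_of_le_of_ne hQP ?_)⟩
  rintro rfl
  exact hf Q hQ (hIP (Ideal.mem_sup_right (Ideal.mem_span_singleton_self f)))

/-- If all primes above `I` have height more than `card σ - k`, then for almost every `k`-tuple of
unit vectors the corresponding `k` members of the linear system spanned by `M` have no common zero
on the zero locus of `I`. The condition `M i = 1` makes the linear system base-point free. -/
theorem measure_exists_common_zero [Fintype σ] [MeasurableSpace (EuclideanSpace ℂ ι)]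
    [BorelSpace (EuclideanSpace ℂ ι)]
    (μ : Measure (Metric.sphere (0 : EuclideanSpace ℂ ι) 1)) [IsProbabilityMeasure μ]
    (hnull : ∀ W : Submodule ℂ (EuclideanSpace ℂ ι), W ≠ ⊤ →
      μ {x | (x : EuclideanSpace ℂ ι) ∈ W} = 0)
    (M : ι → MvPolynomial σ ℂ) (hM : ∃ i, M i = 1) (k : ℕ) :
    ∀ I : Ideal (MvPolynomial σ ℂ),
      (∀ P : Ideal (MvPolynomial σ ℂ), P.IsPrime → I ≤ P → (Fintype.card σ : ℕ∞) < P.height + k) →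
      Measure.pi (fun _ : Fin k => μ) {ψ | ∃ z : σ → ℂ, (∀ p ∈ I, eval z p = 0) ∧
        ∀ i, eval z (linForm M (ψ i)) = 0} = 0 := by
  induction k with
  | zero =>
    intro I hI
    convert measure_empty (μ := Measure.pi (fun _ : Fin 0 => μ))
    rw [Set.eq_empty_iff_forall_notMem]
    rintro ψ ⟨z, hz, -⟩
    -- the maximal ideal of a common zero would have height more than the Krull dimension
    have hP : (RingHom.ker (eval z)).IsPrime := RingHom.ker_isPrime _
    have h1 := hI _ hP hz
    have h2 := Ideal.height_le_ringKrullDim_of_isPrime (I := RingHom.ker (eval z))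
    rw [MvPolynomial.ringKrullDim_of_isNoetherianRing, ringKrullDim_eq_zero_of_field,
      Nat.card_eq_fintype_card, zero_add] at h2
    have h3 : (RingHom.ker (eval z)).height ≤ (Fintype.card σ : ℕ∞) := by exact_mod_cast h2
    simp only [Nat.cast_zero, add_zero] at h1
    exact absurd h3 (not_le.2 h1)
  | succ k ih =>
    intro I hI
    have hstep : ∀ᵐ x : Metric.sphere (0 : EuclideanSpace ℂ ι) 1 ∂μ, ∀ Q ∈ I.minimalPrimes,
        linForm M (x : EuclideanSpace ℂ ι) ∉ Q := by
      rw [ae_ball_iff (I.finite_minimalPrimes_of_isNoetherianRing _).countable]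
      intro Q hQ
      have hW : (Q.restrictScalars ℂ).comap (linForm M) ≠ ⊤ := by
        classical
        obtain ⟨i, hi⟩ := hM
        intro h
        have h1 : EuclideanSpace.single i (1 : ℂ) ∈ (Q.restrictScalars ℂ).comap (linForm M) :=
          h ▸ Submodule.mem_top
        apply hQ.1.1.ne_top
        rw [Ideal.eq_top_iff_one]
        -- the form attached to the `i`-th basis vector is `M i = 1`
        simpa [linForm, hi, ite_smul, Pi.single_apply] using h1
      rw [ae_iff]
      refine measure_mono_null (fun x hx => ?_) (hnull _ hW)
      simpa using hx
    set C : Set (Metric.sphere (0 : EuclideanSpace ℂ ι) 1 ×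
        (Fin k → Metric.sphere (0 : EuclideanSpace ℂ ι) 1)) :=
      {q | ∃ z : σ → ℂ, (∀ p ∈ I, eval z p = 0) ∧ eval z (linForm M q.1) = 0 ∧
        ∀ i, eval z (linForm M (q.2 i)) = 0} with hC
    have hCm : MeasurableSet C := by
      refine measurableSet_exists (K := {a : (σ → ℂ) × (Metric.sphere (0 : EuclideanSpace ℂ ι) 1 ×
        (Fin k → Metric.sphere (0 : EuclideanSpace ℂ ι) 1)) |
          (∀ p ∈ I, eval a.1 p = 0) ∧ eval a.1 (linForm M a.2.1) = 0 ∧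
        ∀ i, eval a.1 (linForm M (a.2.2 i)) = 0}) ?_
      have hev : ∀ p : MvPolynomial σ ℂ, Continuous fun z : σ → ℂ => eval z p :=
        fun p => MvPolynomial.continuous_eval p
      simp only [eval_linForm, Set.ofPred_and, Set.ofPred_forall]
      refine IsClosed.inter ?_ (IsClosed.inter ?_ ?_)
      · exact isClosed_iInter fun p => isClosed_iInter fun _ =>
          isClosed_eq ((hev p).comp continuous_fst) continuous_const
      · refine isClosed_eq (continuous_finsetSum _ fun j _ => ?_) continuous_const
        have := (hev (M j)).comp (continuous_fst (X := σ → ℂ)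
          (Y := Metric.sphere (0 : EuclideanSpace ℂ ι) 1 ×
            (Fin k → Metric.sphere (0 : EuclideanSpace ℂ ι) 1)))
        refine Continuous.mul ?_ this
        fun_prop
      · refine isClosed_iInter fun i =>
          isClosed_eq (continuous_finsetSum _ fun j _ => ?_) continuous_const
        have := (hev (M j)).comp (continuous_fst (X := σ → ℂ)
          (Y := Metric.sphere (0 : EuclideanSpace ℂ ι) 1 ×
            (Fin k → Metric.sphere (0 : EuclideanSpace ℂ ι) 1)))
        refine Continuous.mul ?_ this
        fun_prop
    have hmp := measurePreserving_piFinSuccAbove (fun _ : Fin (k + 1) => μ) 0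
    have hpre : {ψ : Fin (k + 1) → Metric.sphere (0 : EuclideanSpace ℂ ι) 1 |
        ∃ z : σ → ℂ, (∀ p ∈ I, eval z p = 0) ∧ ∀ i, eval z (linForm M (ψ i)) = 0} =
        MeasurableEquiv.piFinSuccAbove
          (fun _ => Metric.sphere (0 : EuclideanSpace ℂ ι) 1) 0 ⁻¹' C := by
      ext ψ
      simp [hC, Fin.forall_fin_succ, Fin.tail]
    rw [hpre, hmp.measure_preimage hCm.nullMeasurableSet, Measure.measure_prod_null hCm]
    filter_upwards [hstep] with x hx
    have hI' := ih (I ⊔ Ideal.span {linForm M (x : EuclideanSpace ℂ ι)}) (by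
      intro P hP hIP
      obtain ⟨Q, hQ, hIQ, hQP⟩ := exists_isPrime_height_add_one_le hx hIP
      calc (Fintype.card σ : ℕ∞) < Q.height + (k + 1 : ℕ) := hI Q hQ hIQ
        _ = (Q.height + 1) + k := by push_cast; ring
        _ ≤ P.height + k := by gcongr)
    refine measure_mono_null ?_ hI'
    rintro ψ ⟨z, hz, hzx, hzψ⟩
    refine ⟨z, ?_, hzψ⟩
    have hle : I ⊔ Ideal.span {linForm M (x : EuclideanSpace ℂ ι)} ≤ RingHom.ker (eval z) := by
      refine sup_le hz ?_
      rw [Ideal.span_singleton_le_iff_mem]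
      exact hzx
    exact fun p hp => hle hp

end Intersection

/-! ### Affine charts of the variety of product vectors -/

section Charts

open MvPolynomial

/-- Affine coordinates on the product vectors `v_1 ⊗ ... ⊗ v_m` with `v_j (i₀ j) ≠ 0` for all `j`,
taken up to scalars: the remaining entries of each `v_j` after normalizing `v_j (i₀ j) = 1`. -/
abbrev ChartVar {m : ℕ} {d : Fin m → ℕ} (i₀ : (j : Fin m) → Fin (d j)) : Type :=
  Σ j, {i : Fin (d j) // i ≠ i₀ j}

open Classical in
/-- The `k`-th coordinate of a product vector, as a monomial in the affine coordinates of the chart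
at `i₀`. -/
noncomputable def chartMonomial {m : ℕ} {d : Fin m → ℕ} (i₀ : (j : Fin m) → Fin (d j))
    (k : (j : Fin m) → Fin (d j)) : MvPolynomial (ChartVar i₀) ℂ :=
  ∏ j, if h : k j = i₀ j then 1 else X ⟨j, k j, h⟩

theorem card_chartVar {m : ℕ} {d : Fin m → ℕ} (i₀ : (j : Fin m) → Fin (d j)) :
    (Fintype.card (ChartVar i₀) : ℤ) = ∑ j, ((d j : ℤ) - 1) := by
  rw [Fintype.card_sigma]
  push_cast
  refine Finset.sum_congr rfl fun j _ => ?_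
  have : 0 < d j := (i₀ j).pos
  simp only [ne_eq, Fintype.card_subtype_compl, Fintype.card_fin, Fintype.card_unique]
  omega

/-- Orthogonality to a product vector is the vanishing of a member of the linear system spanned by
the chart monomials. The inner product is antilinear in `φ`, so the chart point consists of the
complex conjugates of the normalized coordinates. -/
theorem IsProdVec.exists_chart {m : ℕ} {d : Fin m → ℕ} {φ : MultiSpace d} (hφ : IsProdVec d φ) :
    ∃ (i₀ : (j : Fin m) → Fin (d j)) (z : ChartVar i₀ → ℂ),
      ∀ ψ : MultiSpace d, ⟪φ, ψ⟫ = 0 → eval z (linForm (chartMonomial i₀) ψ) = 0 := by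
  obtain ⟨h0, v, hv⟩ := hφ
  obtain ⟨i₀, hi₀⟩ : ∃ i₀, φ i₀ ≠ 0 := by
    by_contra! h
    exact h0 (by ext i; simpa using h i)
  have hne : ∀ j, v j (i₀ j) ≠ 0 := by
    intro j
    rw [hv, Finset.prod_ne_zero_iff] at hi₀
    exact hi₀ j (Finset.mem_univ j)
  refine ⟨i₀, fun s => star (v s.1 s.2.1) / star (v s.1 (i₀ s.1)), fun ψ hψ => ?_⟩
  have hmon : ∀ k, eval (fun s : ChartVar i₀ => star (v s.1 s.2.1) / star (v s.1 (i₀ s.1)))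
      (chartMonomial i₀ k) = star (φ k) / star (φ i₀) := by
    intro k
    rw [chartMonomial, map_prod, hv k, hv i₀, star_prod, star_prod, ← Finset.prod_div_distrib]
    refine Finset.prod_congr rfl fun j _ => ?_
    have := hne j
    split_ifs with h
    · rw [h, map_one, div_self (star_ne_zero.2 this)]
    · simp
  rw [eval_linForm]
  simp_rw [hmon, mul_div_assoc']
  rw [← Finset.sum_div, div_eq_zero_iff]
  left
  simpa [PiLp.inner_apply] using hψ

end Charts

/-- if `n > 1 + ∑_j (d_j - 1)`, then for almost every `n`-tuple of
`n`-tuple of unit vectors `(ψ_1, ..., ψ_n)` of `H` there do NOT exist product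
vectors `φ_1, ..., φ_n` with `⟨φ_j, ψ_k⟩ = 0` iff `j ≠ k` — i.e., by Chefles'
criterion, the `n` states are not unambiguously locally distinguishable. -/
theorem generic_locally_indistinguishable {m : ℕ} (d : Fin m → ℕ) (n : ℕ)
    (hn : (n : ℤ) > 1 + ∑ j, ((d j : ℤ) - 1))
    [MeasurableSpace (MultiSpace d)] [BorelSpace (MultiSpace d)]
    (μ : Measure (Metric.sphere (0 : MultiSpace d) 1)) [IsProbabilityMeasure μ]
    (hinv : ∀ U : MultiSpace d ≃ₗᵢ[ℂ] MultiSpace d, μ.map (sphereMap U) = μ) :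
    ∀ᵐ ψ ∂(Measure.pi fun _ : Fin n => μ),
      ¬ ∃ φ : Fin n → MultiSpace d, (∀ j, IsProdVec d (φ j)) ∧
        ∀ j k : Fin n, ⟪φ j, (ψ k : MultiSpace d)⟫ = 0 ↔ j ≠ k := by
  classical
  rcases n with _ | n
  -- a nonempty sphere forces all local dimensions to be positive, contradicting `hn`
  · obtain ⟨x⟩ : Nonempty (Metric.sphere (0 : MultiSpace d) 1) := nonempty_of_isProbabilityMeasure μ
    exfalso
    have hx : (x : MultiSpace d) ≠ 0 := by
      intro h
      have := x.2
      simp [h] at this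
    obtain ⟨i₀, -⟩ : ∃ i₀, (x : MultiSpace d) i₀ ≠ 0 := by
      by_contra! h
      exact hx (by ext i; simpa using h i)
    have := card_chartVar i₀
    simp only [Nat.cast_zero] at hn
    omega
  have hnull : ∀ i₀ : (j : Fin m) → Fin (d j), ∀ᵐ ψ ∂(Measure.pi fun _ : Fin n => μ),
      ¬ ∃ z : ChartVar i₀ → ℂ, ∀ i, MvPolynomial.eval z
        (linForm (chartMonomial i₀) (ψ i : MultiSpace d)) = 0 := by
    intro i₀
    have hc := card_chartVar i₀
    have h := measure_exists_common_zero μ (fun W hW => measure_submodule_eq_zero μ hinv hW)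
      (chartMonomial i₀) ⟨i₀, by simp [chartMonomial]⟩ n ⊥ (by
        intro P _ _
        have hlt : Fintype.card (ChartVar i₀) < n := by
          push_cast at hn
          omega
        calc (Fintype.card (ChartVar i₀) : ℕ∞) < n := by exact_mod_cast hlt
          _ ≤ P.height + n := le_add_self)
    rw [ae_iff]
    simpa using h
  have hmp := (measurePreserving_snd (μ := μ) (ν := Measure.pi fun _ : Fin n => μ)).comp
    (measurePreserving_piFinSuccAbove (fun _ : Fin (n + 1) => μ) 0)
  filter_upwards [hmp.quasiMeasurePreserving.ae (ae_all_iff.2 hnull)] with ψ hψ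
  rintro ⟨φ, hφ, hφψ⟩
  obtain ⟨i₀, z, hz⟩ := (hφ 0).exists_chart
  refine hψ i₀ ⟨z, fun i => hz _ ?_⟩
  have := (hφψ 0 i.succ).2 (Fin.succ_ne_zero i).symm
  simpa [Fin.tail] using this
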